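/- Suppose all edge weights are positive, the digraph has a globally reachable vertex, and the first n−1 edges form a rooted in-branching with root the vertex indexed n−1. Then the (n−1)×(n−1) reduced edge Laplacian Eτᵀ * A * W * Rᵀ is invertible, and every eigenvalue λ ∈ ℂ of Eτᵀ * A * W * Rᵀ (viewed as a complex matrix) has strictly positive real part. -/

import Mathlib

open Matrix

/-- Gershgorin-type bound. -/
lemma aux_gersh {n m : ℕ} (tail head : Fin m → Fin n)
    (w : Fin m → ℝ) (hw : ∀ e, 0 < w e) (Y : Fin n → ℂ) (hY : Y ≠ 0) (μ : ℂ) (hμ : μ ≠ 0)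
    (h : ∀ v, ∑ e, (if v = tail e then (w e : ℂ) * (Y (tail e) - Y (head e)) else 0) = μ * Y v) :
    0 < μ.re := by
  obtain ⟨v0, hv0⟩ := Function.ne_iff.mp hY
  obtain ⟨v, -, hv⟩ := Finset.exists_max_image Finset.univ (fun v => ‖Y v‖) ⟨v0, Finset.mem_univ _⟩
  have hYv : 0 < ‖Y v‖ := lt_of_lt_of_le (norm_pos_iff.mpr hv0) (hv v0 (Finset.mem_univ _))
  set d : ℝ := ∑ e, (if v = tail e then w e else 0) with hd
  have hd0 : 0 ≤ d := Finset.sum_nonneg (fun e _ => by split_ifs <;> [exact (hw e).le; exact le_rfl])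
  have h1 : ((d : ℂ) - μ) * Y v = ∑ e, (if v = tail e then (w e : ℂ) * Y (head e) else 0) := by
    rw [sub_mul, ← h v, hd, Complex.ofReal_sum, Finset.sum_mul, ← Finset.sum_sub_distrib]
    refine Finset.sum_congr rfl fun e _ => ?_
    split_ifs with he
    · rw [← he]; ring
    · simp
  have h2 : ‖(d : ℂ) - μ‖ * ‖Y v‖ ≤ d * ‖Y v‖ := by
    rw [← norm_mul, h1, hd, Finset.sum_mul]
    refine (norm_sum_le _ _).trans (Finset.sum_le_sum fun e _ => ?_)
    split_ifs
    · rw [norm_mul, Complex.norm_real, Real.norm_of_nonneg (hw e).le]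
      exact mul_le_mul_of_nonneg_left (hv _ (Finset.mem_univ _)) (hw e).le
    · simp
  have h3 : ‖(d : ℂ) - μ‖ ≤ d := le_of_mul_le_mul_right h2 hYv
  have h4 : ‖(d : ℂ) - μ‖ ^ 2 ≤ d ^ 2 := pow_le_pow_left₀ (norm_nonneg _) h3 2
  rw [Complex.sq_norm, Complex.normSq_apply] at h4
  simp at h4
  have h5 : 0 < Complex.normSq μ := Complex.normSq_pos.mpr hμ
  rw [Complex.normSq_apply] at h5
  by_contra hneg
  push Not at hneg
  nlinarith [mul_nonneg hd0 (neg_nonneg.mpr hneg)]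

/-- Maximum principle: a vector with constant nonpositive Laplacian attains its max at the root. -/
lemma aux_max {n m : ℕ} (tail head : Fin m → Fin n)
    (w : Fin m → ℝ) (hw : ∀ e, 0 < w e) (root : Fin n)
    (hreach : ∀ v : Fin n, Relation.ReflTransGen
      (fun a b => ∃ e : Fin m, tail e = a ∧ head e = b) v root) (z : Fin n → ℝ)
    (h : ∀ v, ∑ e, (if v = tail e then w e * (z (tail e) - z (head e)) else 0) ≤ 0) :
    ∀ v, z v ≤ z root := by
  obtain ⟨v, -, hv⟩ := Finset.exists_max_image Finset.univ z ⟨root, Finset.mem_univ _⟩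
  have key : ∀ u, Relation.ReflTransGen
      (fun a b => ∃ e : Fin m, tail e = a ∧ head e = b) v u → z u = z v := by
    intro u hu
    induction hu with
    | refl => rfl
    | @tail b c _ hbc ih =>
      obtain ⟨e, rfl, rfl⟩ := hbc
      have hnn : ∀ e' ∈ Finset.univ, 0 ≤ (if tail e = tail e' then
          w e' * (z (tail e') - z (head e')) else 0) := by
        intro e' _
        split_ifs with he
        · rw [← he, ih]
          exact mul_nonneg (hw e').le (sub_nonneg.mpr (hv _ (Finset.mem_univ _)))
        · exact le_rfl
      have h0 := (Finset.sum_eq_zero_iff_of_nonneg hnn).mp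
        (le_antisymm (h _) (Finset.sum_nonneg hnn)) e (Finset.mem_univ _)
      rw [if_pos rfl] at h0
      rcases mul_eq_zero.mp h0 with h0 | h0
      · exact absurd h0 (hw e).ne'
      · linarith
  intro u
  rw [key root (hreach v)]
  exact hv u (Finset.mem_univ _)

lemma aux_const {n m : ℕ} (tail head : Fin m → Fin n)
    (w : Fin m → ℝ) (hw : ∀ e, 0 < w e) (root : Fin n)
    (hreach : ∀ v : Fin n, Relation.ReflTransGen
      (fun a b => ∃ e : Fin m, tail e = a ∧ head e = b) v root) (z : Fin n → ℝ) (c : ℝ)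
    (h : ∀ v, ∑ e, (if v = tail e then w e * (z (tail e) - z (head e)) else 0) = c) :
    ∀ v, z v = z root := by
  have hneg : ∀ v, ∑ e, (if v = tail e then w e * ((-z) (tail e) - (-z) (head e)) else 0) = -c := by
    intro v
    rw [← h v, ← Finset.sum_neg_distrib]
    refine Finset.sum_congr rfl fun e _ => ?_
    split_ifs
    · simp; ring
    · simp
  have hc0 : c = 0 := by
    apply le_antisymm
    · obtain ⟨v, -, hv⟩ := Finset.exists_min_image Finset.univ z ⟨root, Finset.mem_univ _⟩
      rw [← h v]
      refine Finset.sum_nonpos fun e _ => ?_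
      split_ifs with he
      · rw [← he]
        exact mul_nonpos_of_nonneg_of_nonpos (hw e).le (sub_nonpos.mpr (hv _ (Finset.mem_univ _)))
      · exact le_rfl
    · obtain ⟨v, -, hv⟩ := Finset.exists_max_image Finset.univ z ⟨root, Finset.mem_univ _⟩
      rw [← h v]
      refine Finset.sum_nonneg fun e _ => ?_
      split_ifs with he
      · rw [← he]
        exact mul_nonneg (hw e).le (sub_nonneg.mpr (hv _ (Finset.mem_univ _)))
      · exact le_rfl
  intro v
  apply le_antisymm
  · exact aux_max tail head w hw root hreach z (fun v => by rw [h v, hc0]) v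
  · have := aux_max tail head w hw root hreach (-z) (fun v => by rw [hneg v, hc0]; simp) v
    simpa using this

/-- For a weighted digraph with positive weights, a globally reachable
vertex, and whose first `n-1` edges form a rooted in-branching with root the vertex
`n-1`, the reduced edge Laplacian `Eτᵀ * A * W * Rᵀ` is invertible and all of its
complex eigenvalues have strictly positive real part. -/
theorem reduced_edgeLaplacian_eigenvalues_positive_real_part
    (n m : ℕ) (hn : 2 ≤ n) (hm : 1 ≤ m) (hmn : n - 1 ≤ m)
    (tail head : Fin m → Fin n) (hth : ∀ e, tail e ≠ head e)
    (w : Fin m → ℝ) (hw : ∀ e, 0 < w e)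
    (E : Matrix (Fin n) (Fin m) ℝ)
    (hE : ∀ v e, E v e = if v = tail e then 1 else if v = head e then -1 else 0)
    (A : Matrix (Fin n) (Fin m) ℝ)
    (hA : ∀ v e, A v e = if v = tail e then 1 else 0)
    (W : Matrix (Fin m) (Fin m) ℝ) (hW : W = Matrix.diagonal w)
    (hgr : ∃ v : Fin n, ∀ u : Fin n,
      Relation.ReflTransGen (fun a b => ∃ e, tail e = a ∧ head e = b) u v)
    (root : Fin n) (hroot : root = ⟨n - 1, by omega⟩)
    -- the first n-1 edges form a rooted in-branching with root `root`:
    (hinj : Function.Injective (fun i : Fin (n - 1) => tail ⟨i.val, lt_of_lt_of_le i.2 hmn⟩))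
    (hnotroot : ∀ i : Fin (n - 1), tail ⟨i.val, lt_of_lt_of_le i.2 hmn⟩ ≠ root)
    (hsurj : ∀ v : Fin n, v ≠ root → ∃ i : Fin (n - 1), tail ⟨i.val, lt_of_lt_of_le i.2 hmn⟩ = v)
    (hreach : ∀ v : Fin n, Relation.ReflTransGen
      (fun a b => ∃ e : Fin m, e.val < n - 1 ∧ tail e = a ∧ head e = b) v root)
    (Eτ : Matrix (Fin n) (Fin (n - 1)) ℝ)
    (hEτ : Eτ = E.submatrix id (fun i : Fin (n - 1) => ⟨i.val, lt_of_lt_of_le i.2 hmn⟩))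
    (Ec : Matrix (Fin n) (Fin (m - (n - 1))) ℝ)
    (hEc : Ec = E.submatrix id
      (fun j : Fin (m - (n - 1)) => ⟨n - 1 + j.val, by have := j.2; omega⟩))
    (Tτ : Matrix (Fin (n - 1)) (Fin (m - (n - 1))) ℝ)
    (hTτ : Tτ = (Eτᵀ * Eτ)⁻¹ * Eτᵀ * Ec)
    (R : Matrix (Fin (n - 1)) (Fin m) ℝ)
    (hR : ∀ (i : Fin (n - 1)) (j : Fin m), R i j =
      if h : j.val < n - 1 then (if i.val = j.val then 1 else 0)
      else Tτ i ⟨j.val - (n - 1), by have := j.2; omega⟩) :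
    IsUnit (Eτᵀ * A * W * Rᵀ) ∧
    ∀ μ : ℂ, (∃ x : Fin (n - 1) → ℂ, x ≠ 0 ∧
        ((Eτᵀ * A * W * Rᵀ).map Complex.ofReal).mulVec x = μ • x) →
      0 < μ.re := by
  classical
  have hreach' : ∀ v : Fin n, Relation.ReflTransGen
      (fun a b => ∃ e : Fin m, tail e = a ∧ head e = b) v root := fun v =>
    Relation.ReflTransGen.mono (fun a b ⟨e, _, h1, h2⟩ => ⟨e, h1, h2⟩) _ _ (hreach v)
  -- entries of the transposed incidence matrix
  have hEt : ∀ (z : Fin n → ℝ) (e : Fin m), (Eᵀ *ᵥ z) e = z (tail e) - z (head e) := by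
    intro z e
    have : ∀ v, E v e * z v = (if v = tail e then z v else 0) - (if v = head e then z v else 0) := by
      intro v
      rw [hE]
      by_cases h1 : v = tail e
      · have h2 : v ≠ head e := fun h => hth e (h1.symm.trans h)
        simp [h1, hth e]
      · by_cases h2 : v = head e
        · have := hth e
          simp [h2, this.symm]
        · simp [h1, h2]
    simp only [Matrix.mulVec, dotProduct, Matrix.transpose_apply, this]
    rw [Finset.sum_sub_distrib]
    simp
  have hEτt : ∀ (z : Fin n → ℝ) (i : Fin (n-1)), (Eτᵀ *ᵥ z) i =
      z (tail ⟨i.val, lt_of_lt_of_le i.2 hmn⟩) - z (head ⟨i.val, lt_of_lt_of_le i.2 hmn⟩) := by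
    intro z i
    rw [← hEt, hEτ]
    rfl
  -- kernel of Eτᵀ
  have hker : ∀ z : Fin n → ℝ, Eτᵀ *ᵥ z = 0 → ∀ v, z v = z root := by
    intro z hz v
    have := hreach v
    induction this using Relation.ReflTransGen.head_induction_on with
    | refl => rfl
    | @head a b hab _ ih =>
      obtain ⟨e, he, rfl, rfl⟩ := hab
      have h1 := hEτt z ⟨e.val, he⟩
      rw [hz] at h1
      simp only [Pi.zero_apply, Fin.eta] at h1
      linarith
  have hrank : (Eτᵀ).rank = n - 1 := by
    apply le_antisymm
    · simpa using (Eτᵀ).rank_le_card_height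
    · have h1 := LinearMap.finrank_range_add_finrank_ker (Eτᵀ).mulVecLin
      have h2 : Module.finrank ℝ (LinearMap.ker (Eτᵀ).mulVecLin) ≤ 1 := by
        refine finrank_le_one (⟨fun _ => 1, ?_⟩ : LinearMap.ker (Eτᵀ).mulVecLin) ?_
        · rw [LinearMap.mem_ker]
          ext i
          rw [Matrix.mulVecLin_apply, hEτt]
          simp
        · rintro ⟨z, hz⟩
          refine ⟨z root, ?_⟩
          ext v
          have := hker z hz v
          simp [this]
      rw [Module.finrank_fin_fun] at h1
      unfold Matrix.rank
      omega
  have hG : IsUnit (Eτᵀ * Eτ) := by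
    have hr : (Eτᵀ * Eτ).rank = n - 1 := by
      rw [Matrix.rank_transpose_mul_self, ← Matrix.rank_transpose, hrank]
    rw [← Matrix.mulVec_surjective_iff_isUnit]
    have : LinearMap.range (Eτᵀ * Eτ).mulVecLin = ⊤ := by
      apply Submodule.eq_top_of_finrank_eq
      rw [Module.finrank_fin_fun]
      exact hr
    exact LinearMap.range_eq_top.mp this
  have hGd : IsUnit (Eτᵀ * Eτ).det := (Matrix.isUnit_iff_isUnit_det _).mp hG
  have hRE : R = (Eτᵀ * Eτ)⁻¹ * Eτᵀ * E := by
    ext i j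
    rw [hR]
    by_cases h : j.val < n - 1
    · rw [dif_pos h]
      have h1 : (Eτᵀ * Eτ)⁻¹ * Eτᵀ * Eτ = 1 := by
        rw [Matrix.mul_assoc, Matrix.nonsing_inv_mul _ hGd]
      have h2 := congrFun (congrFun h1 i) ⟨j.val, h⟩
      have h3 : ((Eτᵀ * Eτ)⁻¹ * Eτᵀ * E) i j = ((Eτᵀ * Eτ)⁻¹ * Eτᵀ * Eτ) i ⟨j.val, h⟩ := by
        rw [Matrix.mul_apply, Matrix.mul_apply]
        refine Finset.sum_congr rfl fun v _ => ?_
        congr 1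
        rw [hEτ]
        rfl
      rw [h3, h2, Matrix.one_apply]
      simp [Fin.ext_iff]
    · rw [dif_neg h, hTτ, Matrix.mul_apply, Matrix.mul_apply]
      refine Finset.sum_congr rfl fun v _ => ?_
      congr 1
      rw [hEc]
      simp only [Matrix.submatrix_apply, id]
      congr 1
      ext
      simp
      omega
  have hsumE : ∀ e, ∑ v, E v e = 0 := by
    intro e
    have := hEt (fun _ => 1) e
    simpa [Matrix.mulVec, dotProduct] using this
  have hsumEτ : ∀ e, ∑ v, Eτ v e = 0 := by
    intro e
    rw [hEτ]
    exact hsumE _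
  have hfact : Eτ * R = E := by
    have h1 : Eτᵀ * (Eτ * R - E) = 0 := by
      rw [Matrix.mul_sub, hRE, ← Matrix.mul_assoc, Matrix.mul_assoc _ Eτᵀ E, ← Matrix.mul_assoc,
        Matrix.mul_nonsing_inv _ hGd, Matrix.one_mul, sub_self]
    ext v e
    have h2 : Eτᵀ *ᵥ (fun v => (Eτ * R - E) v e) = 0 := by
      ext i
      exact congrFun (congrFun h1 i) e
    have h3 := hker _ h2
    have h4 : ∑ v, (Eτ * R - E) v e = 0 := by
      simp only [Matrix.sub_apply, Finset.sum_sub_distrib, hsumE, Matrix.mul_apply]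
      rw [Finset.sum_comm]
      simp [← Finset.sum_mul, hsumEτ]
    rw [Finset.sum_congr rfl (fun v _ => h3 v)] at h4
    have hn0 : (n : ℝ) ≠ 0 := by
      have : n ≠ 0 := by omega
      exact_mod_cast this
    have h5 : (Eτ * R - E) root e = 0 := by
      rw [Finset.sum_const, Finset.card_univ, Fintype.card_fin, nsmul_eq_mul] at h4
      exact (mul_eq_zero.mp h4).resolve_left hn0
    have h6 := h3 v
    simp only [h5, Matrix.sub_apply] at h6
    linarith
  have hEtf : Rᵀ * Eτᵀ = Eᵀ := by rw [← Matrix.transpose_mul, hfact]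
  have hunit : IsUnit (Eτᵀ * A * W * Rᵀ) := by
    rw [← Matrix.mulVec_injective_iff_isUnit]
    refine (injective_iff_map_eq_zero (Eτᵀ * A * W * Rᵀ).mulVecLin).mpr ?_
    intro x hx
    rw [Matrix.mulVecLin_apply] at hx
    set z := Eτ *ᵥ ((Eτᵀ * Eτ)⁻¹ *ᵥ x) with hz
    have hzx : Eτᵀ *ᵥ z = x := by
      rw [hz, Matrix.mulVec_mulVec, Matrix.mulVec_mulVec, Matrix.mul_nonsing_inv _ hGd,
        Matrix.one_mulVec]
    have h1 : Eτᵀ *ᵥ (A *ᵥ (W *ᵥ (Eᵀ *ᵥ z))) = 0 := by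
      rw [← hEtf, ← Matrix.mulVec_mulVec z, hzx, ← hx]
      simp only [Matrix.mulVec_mulVec, Matrix.mul_assoc]
    have h2 := hker _ h1
    have h3 := aux_const tail head w hw root hreach' z ((A *ᵥ (W *ᵥ (Eᵀ *ᵥ z))) root) (fun v => by
      rw [← h2 v, hW, Matrix.mulVec, dotProduct]
      refine Finset.sum_congr rfl fun e _ => ?_
      rw [Matrix.mulVec_diagonal, hEt, hA]
      split_ifs <;> simp)
    ext i
    rw [← hzx, hEτt, h3, h3 (head _)]
    simp
  refine ⟨hunit, ?_⟩
  rintro μ ⟨x, hx0, hx⟩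
  set φ : ℝ →+* ℂ := Complex.ofRealHom with hφ
  have hx' : ((Eτᵀ * A * W * Rᵀ).map φ) *ᵥ x = μ • x := hx
  have hunitC : IsUnit ((Eτᵀ * A * W * Rᵀ).map φ) := hunit.map φ.mapMatrix
  have hμ : μ ≠ 0 := by
    rintro rfl
    have hinj' := Matrix.mulVec_injective_iff_isUnit.mpr hunitC
    apply hx0
    apply hinj'
    show ((Eτᵀ * A * W * Rᵀ).map φ) *ᵥ x = ((Eτᵀ * A * W * Rᵀ).map φ) *ᵥ 0
    rw [hx']
    simp
  set Y : Fin n → ℂ := (A * W * Rᵀ).map φ *ᵥ x with hY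
  have hEY : (Eτᵀ).map φ *ᵥ Y = μ • x := by
    rw [hY, Matrix.mulVec_mulVec, ← Matrix.map_mul, ← hx']
    simp only [Matrix.mul_assoc]
  have hY0 : Y ≠ 0 := by
    intro h
    rw [h, Matrix.mulVec_zero] at hEY
    exact (smul_ne_zero hμ hx0) hEY.symm
  have hLY : (A * W * Eᵀ).map φ *ᵥ Y = μ • Y := by
    rw [← hEtf, ← Matrix.mul_assoc, Matrix.map_mul, ← Matrix.mulVec_mulVec, hEY,
      Matrix.mulVec_smul]
  refine aux_gersh tail head w hw Y hY0 μ hμ fun v => ?_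
  have h1 := congrFun hLY v
  rw [Pi.smul_apply, smul_eq_mul] at h1
  rw [← h1, Matrix.map_mul, ← Matrix.mulVec_mulVec]
  have hEtC : ∀ e : Fin m, ((Eᵀ).map φ *ᵥ Y) e = Y (tail e) - Y (head e) := by
    intro e
    have : ∀ v, φ (E v e) * Y v = (if v = tail e then Y v else 0) - (if v = head e then Y v else 0) := by
      intro v
      rw [hE]
      by_cases h1 : v = tail e
      · simp [h1, hth e]
      · by_cases h2 : v = head e
        · have := hth e
          simp [h2, this.symm]
        · simp [h1, h2]
    simp only [Matrix.mulVec, dotProduct, Matrix.transpose_apply, Matrix.map_apply, this]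
    rw [Finset.sum_sub_distrib]
    simp
  rw [Matrix.mulVec, dotProduct]
  refine Finset.sum_congr rfl fun e _ => ?_
  rw [hEtC, Matrix.map_apply, hW, Matrix.mul_diagonal, hA]
  split_ifs <;> simp [hφ]
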